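/- Let 4 ≤ p ≤ q and n = p + q. Then S_i(B_{p,q}^{0,2}) = S_i(B_{p,q}^{2,0}) for i = 0, 1, 2, 3 and S_4(B_{p,q}^{2,0}) − S_4(B_{p,q}^{0,2}) = 4 > 0; in particular B_{p,q}^{0,2} ≺_s B_{p,q}^{2,0}. -/

import Mathlib

open SimpleGraph

open scoped Classical in
/-- The adjacency matrix of a simple graph, with real entries. -/
noncomputable def adjMat {V : Type*} [Fintype V] (G : SimpleGraph V) : Matrix V V ℝ :=
  Matrix.of fun a b => if G.Adj a b then 1 else 0

/-- The `k`-th spectral moment `S_k(G) = tr(A(G)^k)`. -/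
noncomputable def spectralMoment {V : Type*} [Fintype V] [DecidableEq V]
    (G : SimpleGraph V) (k : ℕ) : ℝ :=
  Matrix.trace (adjMat G ^ k)

/-- `SLt G₁ G₂` means `G₁ ≺_s G₂`: for some `k` with `1 ≤ k ≤ n - 1`,
`S_i(G₁) = S_i(G₂)` for all `i < k` and `S_k(G₁) < S_k(G₂)`. -/
def SLt {V : Type*} [Fintype V] [DecidableEq V] (G₁ G₂ : SimpleGraph V) : Prop :=
  ∃ k : ℕ, 1 ≤ k ∧ k ≤ Fintype.card V - 1 ∧
    (∀ i < k, spectralMoment G₁ i = spectralMoment G₂ i) ∧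
    spectralMoment G₁ k < spectralMoment G₂ k

/-- The tree `B_{p,q}^{k,l}` on `p + q` vertices: vertex `0 = u` is adjacent to `1 = v`
and to the `q - 1` vertices `2, …, q`; the distinguished neighbor `2` of `u` carries the
`k` pendant leaves `q+1, …, q+k`; the `l` neighbors `3, …, l+2` of `u` carry one pendant
leaf each (`q+k+j` is attached to `j+2` for `1 ≤ j ≤ l`); and `v` carries the
`p - k - l - 1` pendant leaves `q+k+l+1, …, p+q-1`. -/
def BTree (p q k l : ℕ) : SimpleGraph (Fin (p + q)) :=
  SimpleGraph.fromRel (fun a b =>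
    (a.val = 0 ∧ b.val = 1) ∨
    (a.val = 0 ∧ 2 ≤ b.val ∧ b.val ≤ q) ∨
    (a.val = 2 ∧ q + 1 ≤ b.val ∧ b.val ≤ q + k) ∨
    (q + k + 1 ≤ b.val ∧ b.val ≤ q + k + l ∧ a.val = b.val - (q + k) + 2) ∨
    (a.val = 1 ∧ q + k + l + 1 ≤ b.val))

/-- The tree `D_{p,q}^{k,l}` on `p + q` vertices: vertex `1 = v` is adjacent to `0 = u`
and to the `p - 1` vertices `2, …, p`; the distinguished neighbor `2` of `v` carries the
`k` pendant leaves `p+1, …, p+k`; the `l` neighbors `3, …, l+2` of `v` carry one pendant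
leaf each; and `u` carries the `q - k - l - 1` pendant leaves `p+k+l+1, …, p+q-1`. -/
def DTree (p q k l : ℕ) : SimpleGraph (Fin (p + q)) :=
  SimpleGraph.fromRel (fun a b =>
    (a.val = 0 ∧ b.val = 1) ∨
    (a.val = 1 ∧ 2 ≤ b.val ∧ b.val ≤ p) ∨
    (a.val = 2 ∧ p + 1 ≤ b.val ∧ b.val ≤ p + k) ∨
    (p + k + 1 ≤ b.val ∧ b.val ≤ p + k + l ∧ a.val = b.val - (p + k) + 2) ∨
    (a.val = 0 ∧ p + k + l + 1 ≤ b.val))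

/-- `T ∈ 𝒯_{p+q}^{p,q}`: `T` is a tree on `p + q` vertices with a `(p,q)`-bipartition. -/
def TreeBip (p q : ℕ) (G : SimpleGraph (Fin (p + q))) : Prop :=
  G.IsTree ∧ ∃ A : Finset (Fin (p + q)), A.card = p ∧
    ∀ ⦃x y : Fin (p + q)⦄, G.Adj x y → (x ∈ A ↔ y ∉ A)

/-!
`S_k` counts the closed walks of length `k`. In a forest on `n` vertices there are none of odd
length, and two distinct vertices have at most one common neighbor, so `S_4 = ∑ (2 d² - d)`, summed
over the vertex degrees `d`. Any two trees on `n` vertices agree in `S_0 = n`, `S_1 = 0`,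
`S_2 = 2 (n - 1)` and `S_3 = 0`. Passing from `B^{k,l+m}` to `B^{k+m,l}` replaces one degree `k + 1`
by `k + m + 1` and turns `m` vertices of degree `2` into leaves, so that `S_4` grows by
`2 m (2 k + m - 1)`.
-/

section CommonNeighbors

variable {V : Type*} {G : SimpleGraph V}

theorem commonNeighbors_subsingleton_of_isAcyclic (hG : G.IsAcyclic) {a b : V} (hab : a ≠ b) :
    (G.commonNeighbors a b).Subsingleton := by
  intro x hx y hy
  have hpath {z : V} (haz : G.Adj a z) (hbz : G.Adj b z) :
      (Walk.cons haz hbz.symm.toWalk).IsPath := by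
    simp [haz.ne, hab, hbz.ne', Adj.toWalk]
  have heq := (hG.subsingleton_path a b).elim ⟨_, hpath hx.1 hx.2⟩ ⟨_, hpath hy.1 hy.2⟩
  exact congrArg Walk.snd (congrArg Subtype.val heq)

theorem sum_card_commonNeighbors_eq_sum_degree_sq [Fintype V] [DecidableRel G.Adj] :
    ∑ a, ∑ b, Fintype.card (G.commonNeighbors a b) = ∑ x, G.degree x ^ 2 := by
  have hcard (a b : V) : Fintype.card (G.commonNeighbors a b) =
      ∑ x, (if G.Adj a x then 1 else 0) * (if G.Adj b x then 1 else 0) := by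
    rw [Fintype.card_subtype, Finset.card_filter]
    simp only [mem_commonNeighbors, ite_zero_mul_ite_zero, mul_one]
  have hdegree (x : V) : ∑ a, (if G.Adj a x then 1 else 0) = G.degree x := by
    rw [← Finset.card_filter, ← card_neighborFinset_eq_degree, neighborFinset_eq_filter]
    simp only [G.adj_comm]
  calc ∑ a, ∑ b, Fintype.card (G.commonNeighbors a b)
      = ∑ x, ∑ a, ∑ b, (if G.Adj a x then 1 else 0) * (if G.Adj b x then 1 else 0) := by
        simp only [hcard]
        exact (Finset.sum_congr rfl fun _ _ => Finset.sum_comm).trans Finset.sum_comm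
    _ = ∑ x, G.degree x ^ 2 := by
        simp only [← Finset.mul_sum, ← Finset.sum_mul, hdegree, sq]

end CommonNeighbors

section SpectralMoment

variable {V : Type*} [Fintype V]

theorem adjMat_eq_adjMatrix (G : SimpleGraph V) [DecidableRel G.Adj] :
    adjMat G = G.adjMatrix ℝ := by
  ext a b
  simp [adjMat, adjMatrix_apply]

variable [DecidableEq V]

theorem spectralMoment_zero (G : SimpleGraph V) : spectralMoment G 0 = Fintype.card V := by
  simp [spectralMoment]

variable {G : SimpleGraph V}

theorem spectralMoment_eq_zero_of_odd (hG : G.IsBipartite) {k : ℕ} (hk : Odd k) :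
    spectralMoment G k = 0 := by
  classical
  rw [spectralMoment, adjMat_eq_adjMatrix]
  refine Finset.sum_eq_zero fun a _ => ?_
  have : IsEmpty {w : G.Walk a a | w.length = k} :=
    ⟨fun ⟨w, hw⟩ => Nat.not_even_iff_odd.2 hk (hw ▸ two_colorable_iff_forall_loop_even.1 hG a w)⟩
  rw [Matrix.diag_apply, adjMatrix_pow_apply_eq_card_walk, Fintype.card_eq_zero, Nat.cast_zero]

theorem spectralMoment_two [DecidableRel G.Adj] :
    spectralMoment G 2 = 2 * (G.edgeFinset.card : ℝ) := by
  rw [spectralMoment, adjMat_eq_adjMatrix, pow_two, Matrix.trace]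
  simp only [Matrix.diag_apply, adjMatrix_mul_self_apply_self]
  exact_mod_cast G.sum_degrees_eq_twice_card_edges

theorem spectralMoment_eq_of_isTree {H : SimpleGraph V} (hG : G.IsTree) (hH : H.IsTree) {i : ℕ}
    (hi : i < 4) : spectralMoment G i = spectralMoment H i := by
  classical
  interval_cases i
  · rw [spectralMoment_zero, spectralMoment_zero]
  · rw [spectralMoment_eq_zero_of_odd hG.isAcyclic.isBipartite odd_one,
      spectralMoment_eq_zero_of_odd hH.isAcyclic.isBipartite odd_one]
  · rw [spectralMoment_two, spectralMoment_two,
      Nat.add_right_cancel (hG.card_edgeFinset.trans hH.card_edgeFinset.symm)]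
  · rw [spectralMoment_eq_zero_of_odd hG.isAcyclic.isBipartite (by decide),
      spectralMoment_eq_zero_of_odd hH.isAcyclic.isBipartite (by decide)]

variable [DecidableRel G.Adj]

theorem adjMatrix_sq_apply_eq_card_commonNeighbors {R : Type*} [Semiring R] (a b : V) :
    (G.adjMatrix R ^ 2) a b = Fintype.card (G.commonNeighbors a b) := by
  rw [adjMatrix_pow_apply_eq_card_walk]
  exact congrArg _ (Fintype.card_congr (G.walkLengthTwoEquivCommonNeighbors a b))

theorem spectralMoment_four_eq_sum_card_commonNeighbors_sq :
    spectralMoment G 4 = ∑ a, ∑ b, (Fintype.card (G.commonNeighbors a b) : ℝ) ^ 2 := by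
  have hsymm : (G.adjMatrix ℝ ^ 2).IsSymm := G.isSymm_adjMatrix.pow 2
  rw [spectralMoment, adjMat_eq_adjMatrix, show 4 = 2 + 2 from rfl, pow_add]
  refine Finset.sum_congr rfl fun a _ => Finset.sum_congr rfl fun b _ => ?_
  change (G.adjMatrix ℝ ^ 2) a b * (G.adjMatrix ℝ ^ 2) b a = _
  rw [hsymm.apply a b, adjMatrix_sq_apply_eq_card_commonNeighbors, sq]

theorem spectralMoment_four_of_subsingleton_commonNeighbors
    (hG : Pairwise fun a b => (G.commonNeighbors a b).Subsingleton) :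
    spectralMoment G 4 = ∑ a, (2 * (G.degree a : ℝ) ^ 2 - G.degree a) := by
  have hdiag (a : V) : Fintype.card (G.commonNeighbors a a) = G.degree a := by
    simp [commonNeighbors_eq, ← card_neighborFinset_eq_degree, neighborFinset_eq_filter]
  have hsq (a b : V) : (Fintype.card (G.commonNeighbors a b) : ℝ) ^ 2 =
      Fintype.card (G.commonNeighbors a b) +
        if a = b then (G.degree a : ℝ) ^ 2 - G.degree a else 0 := by
    split_ifs with hab
    · rw [← hab, hdiag]
      ring
    · have hle : Fintype.card (G.commonNeighbors a b) ≤ 1 :=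
        Fintype.card_le_one_iff_subsingleton.2 (hG hab).coe_sort
      interval_cases Fintype.card (G.commonNeighbors a b) <;> simp
  have htotal : ∑ a, ∑ b, (Fintype.card (G.commonNeighbors a b) : ℝ) =
      ∑ x, (G.degree x : ℝ) ^ 2 := by
    exact_mod_cast sum_card_commonNeighbors_eq_sum_degree_sq
  simp only [spectralMoment_four_eq_sum_card_commonNeighbors_sq, hsq, Finset.sum_add_distrib,
    htotal, Finset.sum_ite_eq, Finset.mem_univ, if_true]
  rw [← Finset.sum_add_distrib]
  exact Finset.sum_congr rfl fun a _ => by ring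

end SpectralMoment

namespace BTree

/-- The neighbor of the vertex `b ≠ 0` of `B_{p,q}^{k,l}` on the path from `b` to the root `0`.
The value `0` at the root itself is a junk value. -/
def parent (q k l b : ℕ) : ℕ :=
  if b ≤ q then 0 else if b ≤ q + k then 2 else if b ≤ q + k + l then b - (q + k) + 2 else 1

/-- The degrees of the vertices of `B_{p,q}^{k,l}`, as a function on `ℕ` so that sums over the
vertices become sums over ranges. -/
def vertexDegree (p q k l : ℕ) : ℕ → ℕ
  | 0 => q
  | 1 => p - k - l
  | 2 => k + 1
  | i + 3 => if i < l then 2 else 1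

variable {p q k l : ℕ}

theorem parent_lt (hq : l + 2 ≤ q) {b : ℕ} (hb : b ≠ 0) : parent q k l b < b := by
  unfold parent
  split_ifs <;> omega

theorem adj_iff (hq : l + 2 ≤ q) {a b : Fin (p + q)} :
    (BTree p q k l).Adj a b ↔
      b.val ≠ 0 ∧ a.val = parent q k l b ∨ a.val ≠ 0 ∧ b.val = parent q k l a := by
  simp only [BTree, fromRel_adj, ne_eq, Fin.ext_iff, parent]
  split_ifs <;> omega

theorem connected (hq : l + 2 ≤ q) : (BTree p q k l).Connected := by
  rw [connected_iff_exists_forall_reachable]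
  refine ⟨⟨0, by omega⟩, fun a => ?_⟩
  induction a using WellFoundedLT.induction with
  | ind a ih =>
    by_cases ha : a.val = 0
    · rw [show a = ⟨0, by omega⟩ from Fin.ext ha]
    · have hlt := parent_lt (k := k) hq ha
      have hadj : (BTree p q k l).Adj ⟨parent q k l a, by omega⟩ a :=
        (adj_iff hq).2 (.inl ⟨ha, rfl⟩)
      exact (ih _ hlt).trans hadj.reachable

section Degree

variable [DecidableRel (BTree p q k l).Adj]

theorem degree_of_val_eq_zero (hp : 0 < p) (hq : l + 2 ≤ q) {a : Fin (p + q)} (ha : a.val = 0) :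
    (BTree p q k l).degree a = q := by
  have hN : (BTree p q k l).neighborFinset a = Finset.Ioc a ⟨q, by omega⟩ := by
    ext b
    simp only [mem_neighborFinset, adj_iff hq, parent, Finset.mem_Ioc, Fin.lt_def, Fin.le_def]
    split_ifs <;> omega
  rw [← card_neighborFinset_eq_degree, hN, Fin.card_Ioc, ha, Nat.sub_zero]

theorem degree_of_val_eq_one (hp : k + l < p) (hq : l + 2 ≤ q) {a : Fin (p + q)}
    (ha : a.val = 1) : (BTree p q k l).degree a = p - k - l := by
  have hN : (BTree p q k l).neighborFinset a =
      insert ⟨0, by omega⟩ (Finset.Ioi ⟨q + k + l, by omega⟩) := by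
    ext b
    simp only [mem_neighborFinset, adj_iff hq, parent, Finset.mem_insert, Finset.mem_Ioi,
      Fin.lt_def, Fin.ext_iff]
    split_ifs <;> omega
  rw [← card_neighborFinset_eq_degree, hN, Finset.card_insert_of_notMem (by simp), Fin.card_Ioi]
  dsimp only
  omega

theorem degree_of_val_eq_two (hp : k < p) (hq : l + 2 ≤ q) {a : Fin (p + q)}
    (ha : a.val = 2) : (BTree p q k l).degree a = k + 1 := by
  have hN : (BTree p q k l).neighborFinset a =
      insert ⟨0, by omega⟩ (Finset.Ioc ⟨q, by omega⟩ ⟨q + k, by omega⟩) := by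
    ext b
    simp only [mem_neighborFinset, adj_iff hq, parent, Finset.mem_insert, Finset.mem_Ioc,
      Fin.lt_def, Fin.le_def, Fin.ext_iff]
    split_ifs <;> omega
  rw [← card_neighborFinset_eq_degree, hN, Finset.card_insert_of_notMem (by simp), Fin.card_Ioc,
    Nat.add_sub_cancel_left]

theorem degree_eq_two_of_val_le_add_two (hp : k + l < p) (hq : l + 2 ≤ q) {a : Fin (p + q)}
    (ha : 3 ≤ a.val) (hal : a.val ≤ l + 2) : (BTree p q k l).degree a = 2 := by
  have hN : (BTree p q k l).neighborFinset a =
      {⟨0, by omega⟩, ⟨q + k + (a.val - 2), by omega⟩} := by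
    ext b
    simp only [mem_neighborFinset, adj_iff hq, parent, Finset.mem_insert, Finset.mem_singleton,
      Fin.ext_iff]
    split_ifs <;> omega
  rw [← card_neighborFinset_eq_degree, hN, Finset.card_pair]
  simp only [ne_eq, Fin.ext_iff]
  omega

theorem degree_eq_one_of_add_two_lt_val (hq : l + 2 ≤ q) {a : Fin (p + q)} (ha : l + 2 < a.val) :
    (BTree p q k l).degree a = 1 := by
  have hlt : parent q k l a < a.val := parent_lt hq (by omega)
  have hN : (BTree p q k l).neighborFinset a = {⟨parent q k l a, by omega⟩} := by
    ext b
    simp only [mem_neighborFinset, adj_iff hq, parent, Finset.mem_singleton, Fin.ext_iff]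
    split_ifs <;> omega
  rw [← card_neighborFinset_eq_degree, hN, Finset.card_singleton]

theorem degree_eq_vertexDegree (hp : k + l < p) (hq : l + 2 ≤ q) (a : Fin (p + q)) :
    (BTree p q k l).degree a = vertexDegree p q k l a := by
  match h : a.val with
  | 0 => exact degree_of_val_eq_zero (by omega) hq h
  | 1 => exact degree_of_val_eq_one hp hq h
  | 2 => exact degree_of_val_eq_two (by omega) hq h
  | i + 3 =>
    rw [vertexDegree]
    split_ifs
    · exact degree_eq_two_of_val_le_add_two hp hq (by omega) (by omega)
    · exact degree_eq_one_of_add_two_lt_val hq (by omega)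

theorem sum_degree (hp : k + l < p) (hq : l + 2 ≤ q) {M : Type*} [AddCommMonoid M] (f : ℕ → M) :
    ∑ a, f ((BTree p q k l).degree a) =
      f q + f (p - k - l) + f (k + 1) + l • f 2 + (p + q - 3 - l) • f 1 := by
  obtain ⟨m, hm⟩ : ∃ m, p + q = 3 + (l + m) := ⟨p + q - 3 - l, by omega⟩
  have hmid : ∀ i ∈ Finset.range l, f (vertexDegree p q k l (3 + i)) = f 2 := fun i hi => by
    rw [add_comm, vertexDegree, if_pos (Finset.mem_range.1 hi)]
  have hleaf : ∀ i ∈ Finset.range m, f (vertexDegree p q k l (3 + (l + i))) = f 1 := fun i _ => by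
    rw [add_comm, vertexDegree, if_neg (by omega)]
  simp only [degree_eq_vertexDegree hp hq]
  rw [Fin.sum_univ_eq_sum_range (fun i => f (vertexDegree p q k l i)), hm, Finset.sum_range_add,
    Finset.sum_range_add, Finset.sum_congr rfl hmid, Finset.sum_congr rfl hleaf,
    show 3 + (l + m) - 3 - l = m by omega]
  simp only [Finset.sum_const, Finset.card_range, Finset.sum_range_succ, Finset.sum_range_zero,
    vertexDegree, zero_add, add_assoc]

end Degree

theorem isTree (hp : k + l < p) (hq : l + 2 ≤ q) : (BTree p q k l).IsTree := by
  classical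
  have hsum := sum_degree hp hq id
  simp only [id_eq, smul_eq_mul, sum_degrees_eq_twice_card_edges] at hsum
  rw [isTree_iff_connected_and_card, Nat.card_eq_fintype_card, ← edgeFinset_card, Nat.card_fin]
  exact ⟨connected hq, by omega⟩

theorem spectralMoment_four (hp : k + l < p) (hq : l + 2 ≤ q) :
    spectralMoment (BTree p q k l) 4 =
      (2 * q ^ 2 - q) + (2 * (p - k - l) ^ 2 - (p - k - l)) + (2 * (k + 1) ^ 2 - (k + 1)) + 6 * l +
        (p + q - 3 - l) := by
  classical
  rw [spectralMoment_four_of_subsingleton_commonNeighbors fun _ _ hab =>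
      commonNeighbors_subsingleton_of_isAcyclic (isTree hp hq).isAcyclic hab,
    sum_degree hp hq fun d : ℕ => 2 * (d : ℝ) ^ 2 - d]
  have hk : k ≤ p := by omega
  have hl : l ≤ p - k := by omega
  have h3 : 3 ≤ p + q := by omega
  have hl3 : l ≤ p + q - 3 := by omega
  push_cast [hk, hl, h3, hl3, nsmul_eq_mul]
  ring

theorem spectralMoment_four_sub {m : ℕ} (hp : k + l + m < p) (hq : l + m + 2 ≤ q) :
    spectralMoment (BTree p q (k + m) l) 4 - spectralMoment (BTree p q k (l + m)) 4 =
      2 * m * (2 * k + m - 1) := by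
  rw [spectralMoment_four (by omega) (by omega), spectralMoment_four (by omega) (by omega)]
  push_cast
  ring

end BTree

theorem stmt_17_general (p q k l m : ℕ) (hm : 0 < m) (hkm : 2 ≤ 2 * k + m) (hp : k + l + m < p)
    (hq : l + m + 2 ≤ q) :
    (∀ i < 4, spectralMoment (BTree p q k (l + m)) i = spectralMoment (BTree p q (k + m) l) i) ∧
    spectralMoment (BTree p q (k + m) l) 4 - spectralMoment (BTree p q k (l + m)) 4 =
      2 * m * (2 * k + m - 1) ∧
    SLt (BTree p q k (l + m)) (BTree p q (k + m) l) := by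
  have heq : ∀ i < 4,
      spectralMoment (BTree p q k (l + m)) i = spectralMoment (BTree p q (k + m) l) i := fun _ =>
    spectralMoment_eq_of_isTree (BTree.isTree (by omega) hq) (BTree.isTree (by omega) (by omega))
  have hfour := BTree.spectralMoment_four_sub hp hq
  have hpos : (0 : ℝ) < 2 * m * (2 * k + m - 1) := by
    have hm' : (0 : ℝ) < m := by exact_mod_cast hm
    have hkm' : (2 : ℝ) ≤ 2 * k + m := by exact_mod_cast hkm
    exact mul_pos (by linarith) (by linarith)
  refine ⟨heq, hfour, 4, by norm_num, ?_, heq, by linarith⟩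
  rw [Fintype.card_fin]
  omega

/-- For `4 ≤ p ≤ q` and `n = p + q`:
`S_i(B_{p,q}^{0,2}) = S_i(B_{p,q}^{2,0})` for `i = 0,1,2,3`, and
`S_4(B_{p,q}^{2,0}) - S_4(B_{p,q}^{0,2}) = 4 > 0`; in particular
`B_{p,q}^{0,2} ≺_s B_{p,q}^{2,0}`. -/
theorem stmt_17 (p q : ℕ) (hp : 4 ≤ p) (hpq : p ≤ q) :
    (∀ i < 4, spectralMoment (BTree p q 0 2) i = spectralMoment (BTree p q 2 0) i) ∧
    spectralMoment (BTree p q 2 0) 4 - spectralMoment (BTree p q 0 2) 4 = 4 ∧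
    SLt (BTree p q 0 2) (BTree p q 2 0) := by
  obtain ⟨heq, hfour, hlt⟩ := stmt_17_general p q 0 0 2 two_pos le_rfl (by omega) (by omega)
  exact ⟨heq, hfour.trans (by norm_num), hlt⟩
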